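/- arXiv:2204.00071 — 4 statements merged into one kernel-verified Lean document; each statement's English description precedes it below -/
import Mathlib

section
/- Under the structural assumptions on the gas network, a generalized solution of the gas flow problem, if it exists, is unique: if (p, f) and (p̂, f̂) are two generalized solutions for the same data (the same resistances β, boost ratios α, slack pressures p_s, and non-slack injections q), then p(i) = p̂(i) for every node i ∈ V and f(e) = f̂(e) for every edge e ∈ E. -/
/-! Gas network machinery: a finite directed multigraph is given by vertex and edge
types with source map `sV` and target map `tV`; an undirected step is an edge
together with a direction of traversal. -/

/-- The vertex at which an oriented step starts. -/
def stepTail {V E : Type*} (sV tV : E → V) (st : E × Bool) : V :=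
  if st.2 then sV st.1 else tV st.1

/-- The vertex at which an oriented step ends. -/
def stepHead {V E : Type*} (sV tV : E → V) (st : E × Bool) : V :=
  if st.2 then tV st.1 else sV st.1

/-- `IsWalk sV tV a l b`: the list of oriented steps `l` forms an undirected walk
from `a` to `b`. -/
def IsWalk {V E : Type*} (sV tV : E → V) : V → List (E × Bool) → V → Prop
  | a, [], b => a = b
  | a, st :: l, b => stepTail sV tV st = a ∧ IsWalk sV tV (stepHead sV tV st) l b

/-- An undirected path: a walk in which no vertex is repeated. -/
def IsPath {V E : Type*} (sV tV : E → V) (a : V) (l : List (E × Bool)) (b : V) : Prop :=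
  IsWalk sV tV a l b ∧ (a :: l.map (stepHead sV tV)).Nodup

/-- An undirected (simple) cycle based at `a`: a nonempty closed walk with no repeated
edges and no repeated vertices (other than the base point as start and end). -/
def IsCycle {V E : Type*} (sV tV : E → V) (a : V) (l : List (E × Bool)) : Prop :=
  l ≠ [] ∧ IsWalk sV tV a l a ∧ (l.map Prod.fst).Nodup ∧
    (l.map (stepHead sV tV)).Nodup

/-- A generalized solution of the gas flow problem: pressures lie in the domain `D`,
every pipe satisfies the potential-drop equation, every compressor satisfies the
pressure-boost equation, flow balance holds at every non-slack node, and slack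
pressures are attained. -/
def IsGenSol {V E : Type*} [Fintype E] [DecidableEq V]
    (sV tV : E → V) (pipe : E → Prop) (Ns : Set V)
    (β α : E → ℝ) (ps q : V → ℝ)
    (Pot : ℝ → ℝ) (D : Set ℝ) (p : V → ℝ) (f : E → ℝ) : Prop :=
  (∀ i : V, p i ∈ D) ∧
  (∀ e : E, pipe e → Pot (p (sV e)) - Pot (p (tV e)) = β e * f e * |f e|) ∧
  (∀ e : E, ¬ pipe e → p (tV e) = α e * p (sV e)) ∧
  (∀ i : V, i ∉ Ns →
    (∑ e : E, if tV e = i then f e else 0) -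
      (∑ e : E, if sV e = i then f e else 0) = q i) ∧
  (∀ i ∈ Ns, p i = ps i)

/-! If one solution had larger pressure than the other on a nonempty set of nodes, that set would
contain no slack node, and every edge across its boundary would be a pipe carrying more flow
outwards in the first solution. Flow balance on the set forbids this, so no edge crosses the
boundary, contradicting connectivity. Hence the pressures agree, and so do the flows on the pipes.

The flow difference is then supported on the compressors, which form a forest whose components
contain at most one slack node each. Removing a compressor from this forest leaves one of its two
ends in a component without slack nodes. The removed compressor is the only edge across the boundary
of this component that can carry a flow difference, so by flow balance it carries none. -/

open Relation

theorem strictMono_mul_mul_abs {R : Type*} [CommRing R] [LinearOrder R] [IsStrictOrderedRing R]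
    {c : R} (hc : 0 < c) : StrictMono fun x : R => c * x * |x| := by
  refine strictMono_of_odd_strictMonoOn_nonneg (fun x => by simp) fun x hx y hy hxy => ?_
  simp only [mul_assoc, abs_of_nonneg (Set.mem_Ici.1 hx), abs_of_nonneg (Set.mem_Ici.1 hy)]
  exact mul_lt_mul_of_pos_left (mul_self_lt_mul_self hx hxy) hc

section Paths

variable {V E : Type*} {sV tV : E → V} {a b c : V} {l : List (E × Bool)}

theorem IsWalk.mem_iff_mem {S : Set V} (hS : ∀ e, sV e ∈ S ↔ tV e ∈ S)
    (hl : IsWalk sV tV a l b) : a ∈ S ↔ b ∈ S := by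
  induction l generalizing a with
  | nil => exact iff_of_eq (congrArg (· ∈ S) hl)
  | cons st l ih =>
    obtain ⟨rfl, hl⟩ := hl
    rw [← ih hl]
    obtain ⟨e, _ | _⟩ := st
    exacts [(hS e).symm, hS e]

theorem IsWalk.stepTail_mem (hl : IsWalk sV tV a l b) {st : E × Bool} (hst : st ∈ l) :
    stepTail sV tV st ∈ a :: l.map (stepHead sV tV) := by
  induction l generalizing a with
  | nil => simp at hst
  | cons st' l ih =>
    rcases List.mem_cons.1 hst with rfl | hst
    · exact hl.1 ▸ List.mem_cons_self
    · exact List.mem_cons_of_mem _ (ih hl.2 hst)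

theorem isPath_cons {st : E × Bool} :
    IsPath sV tV a (st :: l) b ↔ stepTail sV tV st = a ∧
      a ∉ (st :: l).map (stepHead sV tV) ∧ IsPath sV tV (stepHead sV tV st) l b := by
  simp only [IsPath, IsWalk, List.map_cons, List.nodup_cons (a := a)]
  tauto

theorem IsPath.exists_suffix (hl : IsPath sV tV a l b)
    (hc : c ∈ a :: l.map (stepHead sV tV)) : ∃ l', l' <:+ l ∧ IsPath sV tV c l' b := by
  induction l generalizing a with
  | nil =>
    obtain rfl : c = a := by simpa using hc
    exact ⟨[], List.suffix_rfl, hl⟩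
  | cons st l ih =>
    rcases List.mem_cons.1 hc with rfl | hc
    · exact ⟨st :: l, List.suffix_rfl, hl⟩
    · obtain ⟨l', hl', hpath⟩ := ih (isPath_cons.1 hl).2.2 hc
      exact ⟨l', hl'.trans (List.suffix_cons st l), hpath⟩

theorem stepTail_eq_or_eq_of_fst_eq {st st' : E × Bool} (h : st.1 = st'.1) :
    stepTail sV tV st = stepTail sV tV st' ∨ stepTail sV tV st = stepHead sV tV st' := by
  obtain ⟨e, _ | _⟩ := st <;> obtain ⟨e', _ | _⟩ := st' <;> simp_all [stepTail, stepHead]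

theorem IsPath.nodup_map_fst (hl : IsPath sV tV a l b) : (l.map Prod.fst).Nodup := by
  induction l generalizing a with
  | nil => exact List.nodup_nil
  | cons st l ih =>
    obtain ⟨rfl, hnot, hl⟩ := isPath_cons.1 hl
    refine List.nodup_cons.2 ⟨fun hmem => hnot ?_, ih hl⟩
    obtain ⟨st', hst', heq⟩ := List.mem_map.1 hmem
    rcases stepTail_eq_or_eq_of_fst_eq heq.symm with h | h <;> rw [h]
    · exact hl.1.stepTail_mem hst'
    · exact List.mem_cons_of_mem _ (List.mem_map_of_mem hst')

theorem IsPath.isCycle_cons {e : E} (hl : IsPath sV tV (tV e) l (sV e))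
    (he : ∀ st ∈ l, st.1 ≠ e) : IsCycle sV tV (sV e) ((e, true) :: l) :=
  ⟨List.cons_ne_nil _ _, ⟨rfl, hl.1⟩,
    List.nodup_cons.2 ⟨fun h => let ⟨st, hst, heq⟩ := List.mem_map.1 h; he st hst heq,
      hl.nodup_map_fst⟩, hl.2⟩

/-- Adjacency in the undirected subgraph with edge set `A`, so that
`ReflTransGen (AdjIn sV tV A)` is reachability in that subgraph. The edge is recorded as an oriented
step, as in `IsWalk`. -/
def AdjIn (sV tV : E → V) (A : Set E) (u v : V) : Prop :=
  ∃ st : E × Bool, st.1 ∈ A ∧ stepTail sV tV st = u ∧ stepHead sV tV st = v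

variable {A B : Set E}

instance : Std.Symm (AdjIn sV tV A) where
  symm := by
    rintro u v ⟨⟨e, _ | _⟩, he, rfl, rfl⟩
    exacts [⟨(e, true), he, rfl, rfl⟩, ⟨(e, false), he, rfl, rfl⟩]

theorem AdjIn.mono (hAB : A ⊆ B) : AdjIn sV tV A ≤ AdjIn sV tV B :=
  fun _ _ => Exists.imp fun _ => And.imp_left (@hAB _)

theorem adjIn_source_target {e : E} (he : e ∈ A) : AdjIn sV tV A (sV e) (tV e) :=
  ⟨(e, true), he, rfl, rfl⟩

theorem exists_isPath_of_reflTransGen_adjIn (h : ReflTransGen (AdjIn sV tV A) a b) :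
    ∃ l, IsPath sV tV a l b ∧ ∀ st ∈ l, st.1 ∈ A := by
  induction h using ReflTransGen.head_induction_on with
  | refl => exact ⟨[], ⟨rfl, List.nodup_singleton b⟩, by simp⟩
  | head hstep _ ih =>
    obtain ⟨st, hst, rfl, rfl⟩ := hstep
    obtain ⟨l, hl, hlA⟩ := ih
    by_cases hmem : stepTail sV tV st ∈ (st :: l).map (stepHead sV tV)
    · obtain ⟨l', hl', hpath⟩ := hl.exists_suffix hmem
      exact ⟨l', hpath, fun st' hst' => hlA st' (hl'.subset hst')⟩
    · exact ⟨st :: l, isPath_cons.2 ⟨rfl, hmem, hl⟩, List.forall_mem_cons.2 ⟨hst, hlA⟩⟩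

theorem not_reflTransGen_adjIn_of_acyclic
    (hA : ∀ a l, IsCycle sV tV a l → ∃ st ∈ l, st.1 ∉ A) {e : E} (he : e ∈ A) :
    ¬ ReflTransGen (AdjIn sV tV (A \ {e})) (tV e) (sV e) := by
  intro h
  obtain ⟨l, hl, hlA⟩ := exists_isPath_of_reflTransGen_adjIn h
  obtain ⟨st, hst, hstA⟩ := hA _ _ (hl.isCycle_cons fun st hst => (hlA st hst).2)
  rcases List.mem_cons.1 hst with rfl | hst
  exacts [hstA he, hstA (hlA st hst).1]

end Paths

section Flows

variable {V E M : Type*} [Fintype E] [DecidableEq V] {sV tV : E → V}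

/-- The net inflow of the edge flow `f` into the node `i`; the left-hand side of the flow balance
equation in `IsGenSol`. -/
def netInflow [AddCommGroup M] (sV tV : E → V) (f : E → M) (i : V) : M :=
  (∑ e : E, if tV e = i then f e else 0) - (∑ e : E, if sV e = i then f e else 0)

theorem netInflow_sub [AddCommGroup M] (f g : E → M) (i : V) :
    netInflow sV tV (f - g) i = netInflow sV tV f i - netInflow sV tV g i := by
  simp only [netInflow, ← Finset.sum_filter, Pi.sub_apply, Finset.sum_sub_distrib]
  abel

theorem sum_netInflow [AddCommGroup M] (f : E → M) (S : Finset V) :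
    ∑ i ∈ S, netInflow sV tV f i =
      ∑ e, ((if tV e ∈ S then f e else 0) - (if sV e ∈ S then f e else 0)) := by
  simp only [netInflow, Finset.sum_sub_distrib]
  congr 1 <;> rw [Finset.sum_comm] <;> simp only [Finset.sum_ite_eq]

theorem sum_crossing_eq_zero [AddCommGroup M] {f : E → M} {S : Set V} [DecidablePred (· ∈ S)]
    (hbal : ∀ i ∈ S, netInflow sV tV f i = 0) :
    ∑ e, ((if tV e ∈ S then f e else 0) - (if sV e ∈ S then f e else 0)) = 0 := by
  let ends : Finset V := Finset.univ.image sV ∪ Finset.univ.image tV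
  have hsum := sum_netInflow (sV := sV) (tV := tV) f (ends.filter (· ∈ S))
  rw [Finset.sum_eq_zero fun i hi => hbal i (Finset.mem_filter.1 hi).2] at hsum
  simpa [ends] using hsum.symm

theorem mem_iff_mem_of_flow_outward [AddCommGroup M] [LinearOrder M] [IsOrderedAddMonoid M]
    {f : E → M} {S : Set V} (hbal : ∀ i ∈ S, netInflow sV tV f i = 0)
    (hout : ∀ e, sV e ∈ S → tV e ∉ S → 0 < f e) (hin : ∀ e, sV e ∉ S → tV e ∈ S → f e < 0)
    (e : E) : sV e ∈ S ↔ tV e ∈ S := by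
  classical
  have hle : ∀ e ∈ Finset.univ,
      (if tV e ∈ S then f e else 0) - (if sV e ∈ S then f e else 0) ≤ 0 := by
    intro e _
    split_ifs with ht hs hs
    · simp
    · simpa using (hin e hs ht).le
    · simpa using (hout e hs ht).le
    · simp
  have hzero := (Finset.sum_eq_zero_iff_of_nonpos hle).1
    (sum_crossing_eq_zero hbal) e (Finset.mem_univ e)
  refine ⟨fun hs => by_contra fun ht => (hout e hs ht).ne' ?_,
    fun ht => by_contra fun hs => (hin e hs ht).ne ?_⟩
  · simpa [hs, ht] using hzero
  · simpa [hs, ht] using hzero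

theorem flow_eq_zero_of_unique_crossing [AddCommGroup M] {f : E → M} {S : Set V}
    (hbal : ∀ i ∈ S, netInflow sV tV f i = 0) {e : E} (he : ¬ (sV e ∈ S ↔ tV e ∈ S))
    (hother : ∀ e' ≠ e, f e' ≠ 0 → (sV e' ∈ S ↔ tV e' ∈ S)) : f e = 0 := by
  classical
  have hsum := sum_crossing_eq_zero hbal
  rw [Finset.sum_eq_single_of_mem e (Finset.mem_univ e)] at hsum
  · by_cases hs : sV e ∈ S <;> by_cases ht : tV e ∈ S <;> simp_all
  · intro e' _ hne
    by_cases hf : f e' = 0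
    · simp [hf]
    · simp [hother e' hne hf]

theorem flow_eq_zero_of_separating [AddCommGroup M] {A : Set E} {f : E → M}
    (hsupp : ∀ e ∉ A, f e = 0) {e : E} {u : V}
    (hbal : ∀ v, ReflTransGen (AdjIn sV tV (A \ {e})) u v → netInflow sV tV f v = 0)
    (he : ¬ (ReflTransGen (AdjIn sV tV (A \ {e})) u (sV e) ↔
      ReflTransGen (AdjIn sV tV (A \ {e})) u (tV e))) : f e = 0 := by
  refine flow_eq_zero_of_unique_crossing
    (S := {v | ReflTransGen (AdjIn sV tV (A \ {e})) u v}) hbal he fun e' hne hf => ?_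
  have hadj : AdjIn sV tV (A \ {e}) (sV e') (tV e') :=
    adjIn_source_target ⟨not_imp_comm.1 (hsupp e') hf, hne⟩
  exact ⟨fun h => h.tail hadj, fun h => h.tail (symm hadj)⟩

theorem flow_eq_zero_of_forest [AddCommGroup M] {A : Set E} {N : Set V} {f : E → M}
    (hsupp : ∀ e ∉ A, f e = 0) (hbal : ∀ i ∉ N, netInflow sV tV f i = 0)
    (hcycle : ∀ a l, IsCycle sV tV a l → ∃ st ∈ l, st.1 ∉ A)
    (hpath : ∀ a ∈ N, ∀ b ∈ N, a ≠ b → ∀ l, IsPath sV tV a l b → ∃ st ∈ l, st.1 ∉ A) :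
    f = 0 := by
  funext e
  by_cases he : e ∈ A
  swap
  · exact hsupp e he
  let R := ReflTransGen (AdjIn sV tV (A \ {e}))
  have hsymm {u v : V} (h : R u v) : R v u := symm h
  have hts : ¬ R (tV e) (sV e) := not_reflTransGen_adjIn_of_acyclic hcycle he
  by_cases hsource : ∀ a, R (sV e) a → a ∉ N
  · exact flow_eq_zero_of_separating hsupp (fun a ha => hbal a (hsource a ha))
      fun h => hts (hsymm (h.1 .refl))
  by_cases htarget : ∀ b, R (tV e) b → b ∉ N
  · exact flow_eq_zero_of_separating hsupp (fun b hb => hbal b (htarget b hb))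
      fun h => hts (h.2 .refl)
  push Not at hsource htarget
  obtain ⟨a, hsa, haN⟩ := hsource
  obtain ⟨b, htb, hbN⟩ := htarget
  have hab : a ≠ b := by
    rintro rfl
    exact hts (htb.trans (hsymm hsa))
  have hlift {u v : V} (h : R u v) : ReflTransGen (AdjIn sV tV A) u v :=
    ReflTransGen.mono (AdjIn.mono Set.sdiff_subset) _ _ h
  obtain ⟨l, hl, hlA⟩ := exists_isPath_of_reflTransGen_adjIn
    (((hlift (hsymm hsa)).tail (adjIn_source_target he)).trans (hlift htb))
  obtain ⟨st, hst, hstA⟩ := hpath a haN b hbN hab l hl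
  exact absurd (hlA st hst) hstA

end Flows

namespace IsGenSol

variable {V E : Type*} [Fintype E] [DecidableEq V] {sV tV : E → V} {pipe : E → Prop} {Ns : Set V}
  {β α : E → ℝ} {ps q : V → ℝ} {Pot : ℝ → ℝ} {D : Set ℝ} {p p' : V → ℝ} {f f' : E → ℝ}

theorem netInflow_sub_eq_zero (h : IsGenSol sV tV pipe Ns β α ps q Pot D p f)
    (h' : IsGenSol sV tV pipe Ns β α ps q Pot D p' f') {i : V} (hi : i ∉ Ns) :
    netInflow sV tV (f - f') i = 0 := by
  obtain ⟨-, -, -, hbal, -⟩ := h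
  obtain ⟨-, -, -, hbal', -⟩ := h'
  exact (netInflow_sub f f' i).trans (sub_eq_zero.2 ((hbal i hi).trans (hbal' i hi).symm))

theorem pressure_eq_of_slack (h : IsGenSol sV tV pipe Ns β α ps q Pot D p f)
    (h' : IsGenSol sV tV pipe Ns β α ps q Pot D p' f') {i : V} (hi : i ∈ Ns) : p i = p' i := by
  obtain ⟨-, -, -, -, hslack⟩ := h
  obtain ⟨-, -, -, -, hslack'⟩ := h'
  exact (hslack i hi).trans (hslack' i hi).symm

theorem pressure_lt_source_iff_target (h : IsGenSol sV tV pipe Ns β α ps q Pot D p f)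
    (h' : IsGenSol sV tV pipe Ns β α ps q Pot D p' f') {e : E} (he : ¬ pipe e) (hα : 0 < α e) :
    p (sV e) < p' (sV e) ↔ p (tV e) < p' (tV e) := by
  obtain ⟨-, -, hboost, -, -⟩ := h
  obtain ⟨-, -, hboost', -, -⟩ := h'
  rw [hboost e he, hboost' e he, mul_lt_mul_iff_right₀ hα]

theorem flow_lt_iff_potential_drop_lt (h : IsGenSol sV tV pipe Ns β α ps q Pot D p f)
    (h' : IsGenSol sV tV pipe Ns β α ps q Pot D p' f') {e : E} (he : pipe e) (hβ : 0 < β e) :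
    f e < f' e ↔
      Pot (p (sV e)) - Pot (p (tV e)) < Pot (p' (sV e)) - Pot (p' (tV e)) := by
  obtain ⟨-, hdrop, -, -, -⟩ := h
  obtain ⟨-, hdrop', -, -, -⟩ := h'
  rw [hdrop e he, hdrop' e he]
  exact (strictMono_mul_mul_abs hβ).lt_iff_lt.symm

theorem flow_eq_of_pipe (h : IsGenSol sV tV pipe Ns β α ps q Pot D p f)
    (h' : IsGenSol sV tV pipe Ns β α ps q Pot D p f') {e : E} (he : pipe e) (hβ : 0 < β e) :
    f e = f' e := by
  obtain ⟨-, hdrop, -, -, -⟩ := h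
  obtain ⟨-, hdrop', -, -, -⟩ := h'
  exact (strictMono_mul_mul_abs hβ).injective ((hdrop e he).symm.trans (hdrop' e he))

theorem flow_lt_of_source_lt_of_target_le (h : IsGenSol sV tV pipe Ns β α ps q Pot D p f)
    (h' : IsGenSol sV tV pipe Ns β α ps q Pot D p' f') (hPot : StrictMonoOn Pot D) {e : E}
    (hβ : pipe e → 0 < β e) (hα : ¬ pipe e → 0 < α e)
    (hs : p (sV e) < p' (sV e)) (ht : p' (tV e) ≤ p (tV e)) : f e < f' e := by
  by_cases he : pipe e
  · rw [h.flow_lt_iff_potential_drop_lt h' he (hβ he)]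
    have hsource := hPot (h.1 _) (h'.1 _) hs
    have htarget := hPot.monotoneOn (h'.1 _) (h.1 _) ht
    linarith
  · exact absurd ((h.pressure_lt_source_iff_target h' he (hα he)).1 hs) ht.not_gt

theorem flow_lt_of_source_le_of_target_lt (h : IsGenSol sV tV pipe Ns β α ps q Pot D p f)
    (h' : IsGenSol sV tV pipe Ns β α ps q Pot D p' f') (hPot : StrictMonoOn Pot D) {e : E}
    (hβ : pipe e → 0 < β e) (hα : ¬ pipe e → 0 < α e)
    (hs : p (sV e) ≤ p' (sV e)) (ht : p' (tV e) < p (tV e)) : f e < f' e := by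
  by_cases he : pipe e
  · rw [h.flow_lt_iff_potential_drop_lt h' he (hβ he)]
    have hsource := hPot.monotoneOn (h.1 _) (h'.1 _) hs
    have htarget := hPot (h'.1 _) (h.1 _) ht
    linarith
  · exact absurd ((h'.pressure_lt_source_iff_target h he (hα he)).2 ht) hs.not_gt

theorem pressure_le (h : IsGenSol sV tV pipe Ns β α ps q Pot D p f)
    (h' : IsGenSol sV tV pipe Ns β α ps q Pot D p' f') (hPot : StrictMonoOn Pot D)
    (hNs : Ns.Nonempty) (hβ : ∀ e, pipe e → 0 < β e) (hα : ∀ e, ¬ pipe e → 0 < α e)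
    (hconn : ∀ a b : V, ∃ l, IsWalk sV tV a l b) : p ≤ p' := by
  let S : Set V := {i | p' i < p i}
  have hslack {i : V} (hi : i ∈ Ns) : i ∉ S := (h.pressure_eq_of_slack h' hi).not_gt
  have hcross : ∀ e, sV e ∈ S ↔ tV e ∈ S := by
    refine mem_iff_mem_of_flow_outward (f := f - f')
      (fun i hi => h.netInflow_sub_eq_zero h' fun hiN => hslack hiN hi)
      (fun e hs ht => sub_pos.2 ?_) (fun e hs ht => sub_neg.2 ?_)
    · exact h'.flow_lt_of_source_lt_of_target_le h hPot (hβ e) (hα e) hs (not_lt.1 ht)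
    · exact h.flow_lt_of_source_le_of_target_lt h' hPot (hβ e) (hα e) (not_lt.1 hs) ht
  intro i
  by_contra hi
  obtain ⟨s, hs⟩ := hNs
  obtain ⟨l, hl⟩ := hconn i s
  exact hslack hs ((hl.mem_iff_mem hcross).1 (not_le.1 hi))

end IsGenSol

/-- Uniqueness of generalized solutions to the gas flow problem: on a connected gas
network in which every path joining two distinct slack nodes contains a pipe and every
cycle contains a pipe, with positive pipe resistances, positive compressor boost
ratios, a nonempty set of slack nodes, and a potential `Pot` strictly increasing on
the pressure domain `D`, any two generalized solutions for the same data coincide. -/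
theorem generalized_solution_unique
    {V E : Type*} [Fintype V] [Fintype E] [DecidableEq V] [DecidableEq E]
    (sV tV : E → V) (pipe : E → Prop) (Ns : Set V)
    (β α : E → ℝ) (ps q : V → ℝ) (Pot : ℝ → ℝ) (D : Set ℝ)
    (hmono : ∀ x ∈ D, ∀ y ∈ D, x < y → Pot x < Pot y)
    (hNs : Ns.Nonempty)
    (hβ : ∀ e, pipe e → 0 < β e)
    (hα : ∀ e, ¬ pipe e → 0 < α e)
    (hconn : ∀ a b : V, ∃ l, IsWalk sV tV a l b)
    (hslackpath : ∀ a ∈ Ns, ∀ b ∈ Ns, a ≠ b →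
      ∀ l, IsPath sV tV a l b → ∃ st ∈ l, pipe st.1)
    (hcyclepipe : ∀ (a : V) (l : List (E × Bool)),
      IsCycle sV tV a l → ∃ st ∈ l, pipe st.1)
    (p f p' f')
    (hsol : IsGenSol sV tV pipe Ns β α ps q Pot D p f)
    (hsol' : IsGenSol sV tV pipe Ns β α ps q Pot D p' f') :
    p = p' ∧ f = f' := by
  have hPot : StrictMonoOn Pot D := fun x hx y hy => hmono x hx y hy
  obtain rfl : p = p' := le_antisymm (hsol.pressure_le hsol' hPot hNs hβ hα hconn)
    (hsol'.pressure_le hsol hPot hNs hβ hα hconn)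
  have hflow : f - f' = 0 := by
    refine flow_eq_zero_of_forest (A := {e | ¬ pipe e}) (N := Ns) (fun e he => ?_)
      (fun i hi => hsol.netInflow_sub_eq_zero hsol' hi) ?_ ?_
    · have hpipe : pipe e := not_not.1 he
      exact sub_eq_zero.2 (hsol.flow_eq_of_pipe hsol' hpipe (hβ e hpipe))
    · simpa using hcyclepipe
    · simpa using hslackpath
  exact ⟨rfl, sub_eq_zero.1 hflow⟩
end

section
/- Consider a path of k ≥ 1 edges between two nodes with fixed end pressures, containing at least one pipe. Let Π : ℝ → ℝ be strictly increasing on a set 𝒫 ⊆ ℝ. Let p_0, p_1, …, p_k ∈ 𝒫 and p̂_0, p̂_1, …, p̂_k ∈ 𝒫 be two pressure profiles along the path with the same endpoints, p_0 = p̂_0 and p_k = p̂_k. Suppose each index i ∈ {1, …, k} is designated either a pipe, in which case there are β_i > 0 and flows f_i, f̂_i ∈ ℝ with Π(p_{i−1}) − Π(p_i) = β_i·f_i·|f_i| and Π(p̂_{i−1}) − Π(p̂_i) = β_i·f̂_i·|f̂_i|, or a compressor, in which case there is α_i > 0 with p_i = α_i·p_{i−1} and p̂_i = α_i·p̂_{i−1}.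 If at least one index is a pipe, then it is not possible that f_i > f̂_i for every pipe index i, and likewise it is not possible that f_i < f̂_i for every pipe index i. -/
/-!
Starting from `p 0 ≤ p' 0`, a pipe with `f' i < f i` turns `p ≤ p'` at its inlet into `p < p'` at
its outlet, since the first profile loses strictly more potential there, while a compressor
preserves both `≤` and `<`. A single pipe therefore makes the inequality strict, and it stays strict
up to the end of the path, which is incompatible with equal end pressures.
-/

theorem lt_of_strict_step {P : Type*} [Preorder P] {u v : ℕ → P} {k m : ℕ}
    (h_start : u 0 ≤ v 0)
    (h_le : ∀ i < k, u i ≤ v i → u (i + 1) ≤ v (i + 1))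
    (h_lt : ∀ i < k, u i < v i → u (i + 1) < v (i + 1))
    (hm : m < k) (h_strict : u m ≤ v m → u (m + 1) < v (m + 1)) :
    u k < v k := by
  have le_upto : ∀ i ≤ k, u i ≤ v i := by
    intro i
    induction i with
    | zero => exact fun _ => h_start
    | succ i ih => exact fun hi => h_le i hi (ih (Nat.le_of_succ_le hi))
  have lt_after : ∀ i, m + 1 ≤ i → i ≤ k → u i < v i := by
    intro i hi
    induction i, hi using Nat.le_induction with
    | base => exact fun _ => h_strict (le_upto m hm.le)
    | succ i _ ih => exact fun hi => h_lt i hi (ih (Nat.le_of_succ_le hi))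
  exact lt_after k hm le_rfl

section FrictionLaw

variable {R : Type*} [Ring R] [LinearOrder R] [IsStrictOrderedRing R]

theorem strictMono_mul_abs_self : StrictMono fun x : R => x * |x| := by
  refine strictMono_of_odd_strictMonoOn_nonneg (fun x => by rw [abs_neg, neg_mul]) ?_
  intro x hx y hy hxy
  simpa only [abs_of_nonneg hx, abs_of_nonneg hy] using mul_self_lt_mul_self hx hxy

theorem strictMono_const_mul_mul_abs_self {β : R} (hβ : 0 < β) :
    StrictMono fun x : R => β * x * |x| := by
  simpa only [mul_assoc] using strictMono_mul_abs_self.const_mul hβ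

end FrictionLaw

/-- The steady states of a path of `k` edges: `p i` is the pressure at node `i ∈ {0, …, k}`, and
`f i` is the flow on edge `i ∈ {1, …, k}`, which leads from node `i - 1` to node `i`. Pipes may obey
any law `drop i` giving the loss of potential as a function of the flow, and compressors any law
`boost i` giving the outlet pressure as a function of the inlet pressure. -/
structure IsSteadyPath {P V F : Type*} [Sub V] (Pot : P → V) (D : Set P) (isPipe : ℕ → Prop)
    (drop : ℕ → F → V) (boost : ℕ → P → P) (k : ℕ) (p : ℕ → P) (f : ℕ → F) : Prop where
  mem : ∀ i ≤ k, p i ∈ D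
  pipe : ∀ i, 1 ≤ i → i ≤ k → isPipe i → Pot (p (i - 1)) - Pot (p i) = drop i (f i)
  compressor : ∀ i, 1 ≤ i → i ≤ k → ¬ isPipe i → p i = boost i (p (i - 1))

section Comparison

variable {P V F : Type*} [LinearOrder P] {Pot : P → V} {D : Set P} {isPipe : ℕ → Prop}
  {drop : ℕ → F → V} {boost : ℕ → P → P} {k : ℕ} {p p' : ℕ → P} {f f' : ℕ → F}

theorem IsSteadyPath.compressor_outlet_le_iff [Sub V]
    (h : IsSteadyPath Pot D isPipe drop boost k p f)
    (h' : IsSteadyPath Pot D isPipe drop boost k p' f')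
    {i : ℕ} (hi : i < k) (h_comp : ¬ isPipe (i + 1)) (h_boost : StrictMonoOn (boost (i + 1)) D) :
    p (i + 1) ≤ p' (i + 1) ↔ p i ≤ p' i := by
  have h_eq : p (i + 1) = boost (i + 1) (p i) := h.compressor (i + 1) i.succ_pos hi h_comp
  have h_eq' : p' (i + 1) = boost (i + 1) (p' i) := h'.compressor (i + 1) i.succ_pos hi h_comp
  rw [h_eq, h_eq']
  exact h_boost.le_iff_le (h.mem i hi.le) (h'.mem i hi.le)

variable [AddCommGroup V] [PartialOrder V] [IsOrderedAddMonoid V]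

theorem outlet_lt_outlet_of_drop_lt_drop (hPot : StrictMonoOn Pot D) {a b a' b' : P}
    (ha : a ∈ D) (hb : b ∈ D) (ha' : a' ∈ D) (hb' : b' ∈ D)
    (h_inlet : a ≤ a') (h_drop : Pot a' - Pot b' < Pot a - Pot b) : b < b' := by
  have h_pot_inlet : Pot a ≤ Pot a' := hPot.monotoneOn ha ha' h_inlet
  have h_pot_outlet : Pot b < Pot b' :=
    calc
      Pot b = Pot a - (Pot a - Pot b) := (sub_sub_cancel _ _).symm
      _ < Pot a - (Pot a' - Pot b') := sub_lt_sub_left h_drop _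
      _ ≤ Pot a' - (Pot a' - Pot b') := sub_le_sub_right h_pot_inlet _
      _ = Pot b' := sub_sub_cancel _ _
  exact (hPot.lt_iff_lt hb hb').mp h_pot_outlet

variable [Preorder F]

namespace IsSteadyPath

theorem pipe_outlet_lt (hPot : StrictMonoOn Pot D)
    (h : IsSteadyPath Pot D isPipe drop boost k p f)
    (h' : IsSteadyPath Pot D isPipe drop boost k p' f')
    {i : ℕ} (hi : i < k) (h_pipe : isPipe (i + 1)) (h_drop : StrictMono (drop (i + 1)))
    (h_flow : f' (i + 1) < f (i + 1)) (h_inlet : p i ≤ p' i) : p (i + 1) < p' (i + 1) := by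
  refine outlet_lt_outlet_of_drop_lt_drop hPot (h.mem i hi.le) (h.mem (i + 1) hi)
    (h'.mem i hi.le) (h'.mem (i + 1) hi) h_inlet ?_
  have h_eq : Pot (p i) - Pot (p (i + 1)) = drop (i + 1) (f (i + 1)) :=
    h.pipe (i + 1) i.succ_pos hi h_pipe
  have h_eq' : Pot (p' i) - Pot (p' (i + 1)) = drop (i + 1) (f' (i + 1)) :=
    h'.pipe (i + 1) i.succ_pos hi h_pipe
  rw [h_eq, h_eq']
  exact h_drop h_flow

theorem end_lt_end (hPot : StrictMonoOn Pot D)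
    (h_drop : ∀ i, 1 ≤ i → i ≤ k → isPipe i → StrictMono (drop i))
    (h_boost : ∀ i, 1 ≤ i → i ≤ k → ¬ isPipe i → StrictMonoOn (boost i) D)
    (h : IsSteadyPath Pot D isPipe drop boost k p f)
    (h' : IsSteadyPath Pot D isPipe drop boost k p' f')
    (h_exists : ∃ i, 1 ≤ i ∧ i ≤ k ∧ isPipe i)
    (h_start : p 0 ≤ p' 0) (h_flow : ∀ i, 1 ≤ i → i ≤ k → isPipe i → f' i < f i) :
    p k < p' k := by
  have pipe_step (i : ℕ) (hi : i < k) (h_pipe : isPipe (i + 1)) (h_inlet : p i ≤ p' i) :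
      p (i + 1) < p' (i + 1) :=
    h.pipe_outlet_lt hPot h' hi h_pipe (h_drop _ i.succ_pos hi h_pipe)
      (h_flow _ i.succ_pos hi h_pipe) h_inlet
  have compressor_step_le_iff (i : ℕ) (hi : i < k) (h_comp : ¬ isPipe (i + 1)) :
      p (i + 1) ≤ p' (i + 1) ↔ p i ≤ p' i :=
    h.compressor_outlet_le_iff h' hi h_comp (h_boost _ i.succ_pos hi h_comp)
  have compressor_step_lt_iff (i : ℕ) (hi : i < k) (h_comp : ¬ isPipe (i + 1)) :
      p (i + 1) < p' (i + 1) ↔ p i < p' i :=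
    lt_iff_lt_of_le_iff_le <|
      h'.compressor_outlet_le_iff h hi h_comp (h_boost _ i.succ_pos hi h_comp)
  obtain ⟨m, hm, h_pipe⟩ : ∃ m < k, isPipe (m + 1) := by
    obtain ⟨i, hi, hik, h_pipe⟩ := h_exists
    obtain ⟨m, rfl⟩ := Nat.exists_eq_add_of_le' hi
    exact ⟨m, hik, h_pipe⟩
  refine lt_of_strict_step h_start (fun i hi h_le => ?_) (fun i hi h_lt => ?_) hm
    (pipe_step m hm h_pipe)
  · by_cases h_kind : isPipe (i + 1)
    · exact (pipe_step i hi h_kind h_le).le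
    · exact (compressor_step_le_iff i hi h_kind).mpr h_le
  · by_cases h_kind : isPipe (i + 1)
    · exact pipe_step i hi h_kind h_lt.le
    · exact (compressor_step_lt_iff i hi h_kind).mpr h_lt

end IsSteadyPath

theorem path_flows_cannot_all_increase_general (hPot : StrictMonoOn Pot D)
    (h_drop : ∀ i, 1 ≤ i → i ≤ k → isPipe i → StrictMono (drop i))
    (h_boost : ∀ i, 1 ≤ i → i ≤ k → ¬ isPipe i → StrictMonoOn (boost i) D)
    (h : IsSteadyPath Pot D isPipe drop boost k p f)
    (h' : IsSteadyPath Pot D isPipe drop boost k p' f')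
    (h_start : p 0 = p' 0) (h_end : p k = p' k) (h_exists : ∃ i, 1 ≤ i ∧ i ≤ k ∧ isPipe i) :
    ¬ (∀ i, 1 ≤ i → i ≤ k → isPipe i → f' i < f i) ∧
    ¬ (∀ i, 1 ≤ i → i ≤ k → isPipe i → f i < f' i) :=
  ⟨fun h_flow => (h.end_lt_end hPot h_drop h_boost h' h_exists h_start.le h_flow).ne h_end,
    fun h_flow => (h'.end_lt_end hPot h_drop h_boost h h_exists h_start.ge h_flow).ne' h_end⟩

end Comparison

/-- Along a path of `k ≥ 1` edges with fixed end pressures, containing at least one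
pipe, two pressure/flow profiles satisfying the same pipe equations
`Π(p_{i-1}) - Π(p_i) = β_i f_i |f_i|` (with `β_i > 0`) and compressor equations
`p_i = α_i p_{i-1}` (with `α_i > 0`), with all pressures in a set `D` on which the
potential `Pot` is strictly increasing and with equal endpoint pressures, cannot have
`f_i > f'_i` on every pipe, nor `f_i < f'_i` on every pipe. -/
theorem path_flows_cannot_all_increase
    (k : ℕ) (hk : 1 ≤ k)
    (Pot : ℝ → ℝ) (D : Set ℝ)
    (hmono : ∀ x ∈ D, ∀ y ∈ D, x < y → Pot x < Pot y)
    (isPipe : ℕ → Prop)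
    (p p' β f f' α : ℕ → ℝ)
    (hpD : ∀ i ≤ k, p i ∈ D) (hp'D : ∀ i ≤ k, p' i ∈ D)
    (hstart : p 0 = p' 0) (hend : p k = p' k)
    (hpipe : ∀ i, 1 ≤ i → i ≤ k → isPipe i →
      0 < β i ∧
      Pot (p (i - 1)) - Pot (p i) = β i * f i * |f i| ∧
      Pot (p' (i - 1)) - Pot (p' i) = β i * f' i * |f' i|)
    (hcomp : ∀ i, 1 ≤ i → i ≤ k → ¬ isPipe i →
      0 < α i ∧ p i = α i * p (i - 1) ∧ p' i = α i * p' (i - 1))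
    (hex : ∃ i, 1 ≤ i ∧ i ≤ k ∧ isPipe i) :
    ¬ (∀ i, 1 ≤ i → i ≤ k → isPipe i → f' i < f i) ∧
    ¬ (∀ i, 1 ≤ i → i ≤ k → isPipe i → f i < f' i) := by
  exact path_flows_cannot_all_increase_general
    (drop := fun i x => β i * x * |x|) (boost := fun i x => α i * x)
    (fun x hx y hy => hmono x hx y hy)
    (fun i h₁ h₂ hi => strictMono_const_mul_mul_abs_self (hpipe i h₁ h₂ hi).1)
    (fun i h₁ h₂ hi => (strictMono_mul_left_of_pos (hcomp i h₁ h₂ hi).1).strictMonoOn D)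
    ⟨hpD, fun i h₁ h₂ hi => (hpipe i h₁ h₂ hi).2.1, fun i h₁ h₂ hi => (hcomp i h₁ h₂ hi).2.1⟩
    ⟨hp'D, fun i h₁ h₂ hi => (hpipe i h₁ h₂ hi).2.2, fun i h₁ h₂ hi => (hcomp i h₁ h₂ hi).2.2⟩
    hstart hend hex
end

section
/- Let G = (V, E) be a finite directed multigraph with source and target maps s, t : E → V, let f : E → ℝ be edge flows, and let q : V → ℝ be nodal injections satisfying flow conservation at every node: for all i ∈ V, ∑_{e : s(e)=i} f(e) − ∑_{e : t(e)=i} f(e) = q(i). If q is not identically zero, then there exist nodes m and n with q(m) > 0 and q(n) < 0, and a simple path from m to n along which all flows are directed from m toward n: that is, there exist pairwise distinct vertices v_0 = m, v_1, …, v_r = n (r ≥ 1) and edges e_1, …, e_r such that for each j, either s(e_j) = v_{j−1}, t(e_j) = v_j, and f(e_j) > 0, or s(e_j) = v_j, t(e_j) = v_{j−1}, and f(e_j) < 0. -/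
/-!
Summing the conservation law over a finite set `S` of vertices cancels the edges inside `S` and
leaves the net flow out of `S`. With `S` containing every endpoint the sum is zero, so a nonzero
injection is positive at some `m`. With `S` the set of vertices reachable from `m` along the flow,
no flow leaves `S`, so the injections on `S` sum to at most zero; as `m ∈ S` is positive, some
vertex of `S` is a withdrawal node. Cutting out cycles makes the path that reaches it simple.
-/

open scoped SetRel

section SimplePaths

variable {α : Type*} {r : SetRel α α}

theorem relSeries_take_injective {p : RelSeries r} (hp : Function.Injective p)
    (i : Fin (p.length + 1)) : Function.Injective (p.take i) :=
  fun _ _ hjk => Fin.ext (Fin.mk.inj (hp hjk))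

theorem relSeries_snoc_injective {p : RelSeries r} (hp : Function.Injective p) {c : α}
    (hc : c ∉ p) (hstep : p.last ~[r] c) : Function.Injective (p.snoc c hstep) := by
  have hnodup : p.toList.Nodup := List.nodup_ofFn.mpr hp
  have hnotMem : c ∉ p.toList := RelSeries.mem_toList.not.mpr hc
  rw [← List.nodup_ofFn]
  change (p.snoc c hstep).toList.Nodup
  rw [RelSeries.toList_snoc]
  exact List.concat_eq_append ▸ hnodup.concat hnotMem

theorem exists_injective_relSeries_of_reflTransGen {a b : α}
    (h : Relation.ReflTransGen (· ~[r] ·) a b) :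
    ∃ p : RelSeries r, Function.Injective p ∧ p.head = a ∧ p.last = b := by
  induction h with
  | refl =>
    exact ⟨.singleton r a, Function.injective_of_subsingleton (α := Fin 1) _, rfl, rfl⟩
  | @tail b c _ hbc ih =>
    obtain ⟨p, hinj, rfl, rfl⟩ := ih
    by_cases hc : c ∈ p
    · obtain ⟨i, rfl⟩ := hc
      exact ⟨p.take i, relSeries_take_injective hinj i, p.head_take i, p.last_take i⟩
    · exact ⟨p.snoc c hbc, relSeries_snoc_injective hinj hc hbc, p.head_snoc c hbc,
        p.last_snoc c hbc⟩

end SimplePaths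

section Flow

variable {V E M : Type*}

/-- The net flow out of the vertex `i` in the directed multigraph with source map `s` and target
map `t`, for the edge flow `f`. It is the nodal injection that the conservation law assigns
to `i`. -/
def netOutflow [Fintype E] [DecidableEq V] [AddCommGroup M] (s t : E → V) (f : E → M) (i : V) :
    M :=
  (∑ e : E, if s e = i then f e else 0) - ∑ e : E, if t e = i then f e else 0

/-- The edge `e` carries flow from `a` to `b`. A negative flow is a flow against the orientation
of the edge. -/
def CarriesFlow [Zero M] [LT M] (s t : E → V) (f : E → M) (e : E) (a b : V) : Prop :=
  (s e = a ∧ t e = b ∧ 0 < f e) ∨ (s e = b ∧ t e = a ∧ f e < 0)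

/-- The relation between vertices `a` and `b` that some edge carries flow from `a` to `b`; its
relation series are the directed flow paths. -/
def flowStep [Zero M] [LT M] (s t : E → V) (f : E → M) : SetRel V V :=
  {(a, b) | ∃ e, CarriesFlow s t f e a b}

/-- The set of all endpoints of edges. A directed path stays inside it after its first vertex, so
only finitely many vertices are reachable from a given one even if `V` is infinite. -/
def endpoints [Fintype E] [DecidableEq V] (s t : E → V) : Finset V :=
  Finset.univ.image s ∪ Finset.univ.image t

variable {s t : E → V} {f : E → M}

section Endpoints

variable [Fintype E] [DecidableEq V]

theorem source_mem_endpoints (e : E) : s e ∈ endpoints s t :=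
  Finset.mem_union_left _ (Finset.mem_image_of_mem s (Finset.mem_univ e))

theorem target_mem_endpoints (e : E) : t e ∈ endpoints s t :=
  Finset.mem_union_right _ (Finset.mem_image_of_mem t (Finset.mem_univ e))

theorem mem_endpoints_of_flowStep [Zero M] [LT M] {a b : V} (h : a ~[flowStep s t f] b) :
    b ∈ endpoints s t := by
  obtain ⟨e, ⟨-, rfl, -⟩ | ⟨rfl, -, -⟩⟩ := h
  · exact target_mem_endpoints e
  · exact source_mem_endpoints e

end Endpoints

section Cut

variable [Fintype E] [DecidableEq V] [AddCommGroup M]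

theorem sum_netOutflow (S : Finset V) :
    ∑ i ∈ S, netOutflow s t f i =
      ∑ e : E, ((if s e ∈ S then f e else 0) - if t e ∈ S then f e else 0) := by
  have sum_incident (g : E → V) :
      ∑ i ∈ S, ∑ e : E, (if g e = i then f e else 0) = ∑ e : E, if g e ∈ S then f e else 0 := by
    rw [Finset.sum_comm]
    simp only [Finset.sum_ite_eq]
  simp only [netOutflow, Finset.sum_sub_distrib, sum_incident]

theorem sum_netOutflow_eq_zero {S : Finset V} (hS : endpoints s t ⊆ S) :
    ∑ i ∈ S, netOutflow s t f i = 0 := by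
  rw [sum_netOutflow]
  refine Finset.sum_eq_zero fun e _ => ?_
  rw [if_pos (hS (source_mem_endpoints e)), if_pos (hS (target_mem_endpoints e)), sub_self]

variable [LinearOrder M] [IsOrderedAddMonoid M]

theorem sum_netOutflow_nonpos {S : Finset V}
    (hS : ∀ a ∈ S, ∀ b, a ~[flowStep s t f] b → b ∈ S) :
    ∑ i ∈ S, netOutflow s t f i ≤ 0 := by
  rw [sum_netOutflow]
  refine Finset.sum_nonpos fun e _ => ?_
  by_cases hs : s e ∈ S <;> by_cases ht : t e ∈ S <;>
    simp only [hs, ht, if_true, if_false, sub_self, sub_zero, zero_sub, le_refl]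
  · have flow_not_pos : ¬ 0 < f e := fun hf => ht (hS _ hs _ ⟨e, .inl ⟨rfl, rfl, hf⟩⟩)
    exact not_lt.mp flow_not_pos
  · have flow_not_neg : ¬ f e < 0 := fun hf => hs (hS _ ht _ ⟨e, .inr ⟨rfl, rfl, hf⟩⟩)
    exact neg_nonpos.mpr (not_lt.mp flow_not_neg)

theorem exists_netOutflow_pos (h : netOutflow s t f ≠ 0) : ∃ m, 0 < netOutflow s t f m := by
  obtain ⟨i, hi⟩ := Function.ne_iff.mp h
  obtain ⟨m, -, hm⟩ := Finset.exists_pos_of_sum_zero_of_exists_nonzero (netOutflow s t f)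
    (sum_netOutflow_eq_zero (Finset.subset_insert i (endpoints s t)))
    ⟨i, Finset.mem_insert_self i _, hi⟩
  exact ⟨m, hm⟩

theorem exists_reachable_netOutflow_neg {m : V} (hm : 0 < netOutflow s t f m) :
    ∃ n, Relation.ReflTransGen (· ~[flowStep s t f] ·) m n ∧ netOutflow s t f n < 0 := by
  classical
  by_contra! hnonneg
  let S := (insert m (endpoints s t)).filter (Relation.ReflTransGen (· ~[flowStep s t f] ·) m)
  have hmS : m ∈ S := Finset.mem_filter.mpr ⟨Finset.mem_insert_self _ _, .refl⟩
  have hclosed : ∀ a ∈ S, ∀ b, a ~[flowStep s t f] b → b ∈ S := fun a ha b hab =>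
    Finset.mem_filter.mpr ⟨Finset.mem_insert_of_mem (mem_endpoints_of_flowStep hab),
      (Finset.mem_filter.mp ha).2.tail hab⟩
  have hpos : 0 < ∑ i ∈ S, netOutflow s t f i :=
    Finset.sum_pos' (fun i hi => hnonneg i (Finset.mem_filter.mp hi).2) ⟨m, hmS, hm⟩
  exact hpos.not_ge (sum_netOutflow_nonpos hclosed)

end Cut

end Flow

theorem exists_directed_flow_path_general
    {V E M : Type*} [Fintype E] [DecidableEq V]
    [AddCommGroup M] [LinearOrder M] [IsOrderedAddMonoid M]
    (s t : E → V) (f : E → M) (q : V → M)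
    (hcons : ∀ i : V, netOutflow s t f i = q i) (hq : q ≠ 0) :
    ∃ (m n : V) (r : ℕ) (v : Fin (r + 1) → V) (e : Fin r → E),
      0 < q m ∧ q n < 0 ∧ 1 ≤ r ∧ Function.Injective v ∧
      v 0 = m ∧ v (Fin.last r) = n ∧
      ∀ j : Fin r, CarriesFlow s t f (e j) (v j.castSucc) (v j.succ) := by
  obtain rfl : netOutflow s t f = q := funext hcons
  obtain ⟨m, hm⟩ := exists_netOutflow_pos hq
  obtain ⟨n, hreach, hn⟩ := exists_reachable_netOutflow_neg hm
  obtain ⟨p, hinj, rfl, rfl⟩ := exists_injective_relSeries_of_reflTransGen hreach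
  choose e he using p.step
  have hlength : p.length ≠ 0 := p.length_ne_zero_of_nontrivial
    ⟨_, p.head_mem, _, p.last_mem, fun h => (h ▸ hm).not_gt hn⟩
  exact ⟨p.head, p.last, p.length, p, e, hm, hn, Nat.one_le_iff_ne_zero.mpr hlength, hinj,
    rfl, rfl, he⟩

/-- On a finite directed multigraph with edge flows `f` and nodal injections `q`
satisfying flow conservation (net outflow equals `q i` at every node `i`), if `q`
is not identically zero then there exist an injection node `m` (`q m > 0`), a
withdrawal node `n` (`q n < 0`), and a simple (non-intersecting) path from `m` to
`n` along which every edge carries flow directed from `m` toward `n`: an edge is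
traversed forwards with positive flow, or backwards with negative flow. -/
theorem exists_directed_flow_path
    {V E : Type*} [Fintype V] [Fintype E] [DecidableEq V]
    (sV tV : E → V) (f : E → ℝ) (q : V → ℝ)
    (hcons : ∀ i : V,
      (∑ e : E, if sV e = i then f e else 0) -
        (∑ e : E, if tV e = i then f e else 0) = q i)
    (hq : q ≠ 0) :
    ∃ (m n : V) (r : ℕ) (v : Fin (r + 1) → V) (e : Fin r → E),
      0 < q m ∧ q n < 0 ∧ 1 ≤ r ∧ Function.Injective v ∧
      v 0 = m ∧ v (Fin.last r) = n ∧
      ∀ j : Fin r,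
        (sV (e j) = v j.castSucc ∧ tV (e j) = v j.succ ∧ 0 < f (e j)) ∨
        (sV (e j) = v j.succ ∧ tV (e j) = v j.castSucc ∧ f (e j) < 0) :=
  exists_directed_flow_path_general sV tV f q hcons hq
end

section
/- Let b₁ > 0 and b₂ > 0 and define the CNGA potential Π(p) = (b₁/2)·p² + (b₂/3)·p³. Then Π is strictly increasing on the set S₁ = {p ∈ ℝ : p ≤ −3b₁/(2b₂)} ∪ {p ∈ ℝ : p > 0}: for all p, p̂ ∈ S₁ with p < p̂, one has Π(p) < Π(p̂). -/
/-!
The potential factors as `Π(p) = p² (b₁/2 + b₂ p/3)`, so it is nonpositive up to its root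
`-3b₁/(2b₂)` and positive to the right of `0`; this settles pairs of points on different branches
of `S₁`. The lower branch lies to the left of the root `-b₁/b₂` of the density `Π'`, where the
difference quotient of `Π` is a sum of products of nonpositive factors.
-/

open Set

theorem strictMonoOn_union_of_lt {α β : Type*} [Preorder α] [Preorder β] {f : α → β} {s t : Set α}
    (hs : StrictMonoOn f s) (ht : StrictMonoOn f t) (hst : ∀ x ∈ s, ∀ y ∈ t, x < y)
    (hf : ∀ x ∈ s, ∀ y ∈ t, f x < f y) : StrictMonoOn f (s ∪ t) := by
  rintro x (hx | hx) y (hy | hy) hxy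
  · exact hs hx hy hxy
  · exact hf x hx y hy
  · exact absurd hxy (hst y hy x hx).asymm
  · exact ht hx hy hxy

section CNGA

variable {K : Type*} [Field K]

/-- The CNGA potential `Π`, the antiderivative vanishing at `0` of the density
`ρ(p) = b₁ p + b₂ p²`. The coefficients lie in an arbitrary field, so `Π` is given by its formula
rather than as an integral. -/
def cngaPotential (b₁ b₂ p : K) : K :=
  b₁ / 2 * p ^ 2 + b₂ / 3 * p ^ 3

variable [LinearOrder K] [IsStrictOrderedRing K] {b₁ b₂ p : K}

theorem cngaPotential_nonpos (hb₂ : 0 < b₂) (hp : p ≤ -(3 * b₁) / (2 * b₂)) :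
    cngaPotential b₁ b₂ p ≤ 0 := by
  rw [le_div_iff₀ (by positivity)] at hp
  calc cngaPotential b₁ b₂ p = p ^ 2 * (b₁ / 2 + b₂ / 3 * p) := by rw [cngaPotential]; ring
    _ ≤ 0 := mul_nonpos_of_nonneg_of_nonpos (sq_nonneg p) (by linarith)

theorem cngaPotential_pos (hb₁ : 0 ≤ b₁) (hb₂ : 0 < b₂) (hp : 0 < p) :
    0 < cngaPotential b₁ b₂ p := by
  unfold cngaPotential
  positivity

theorem strictMonoOn_cngaPotential_Ici (hb₁ : 0 ≤ b₁) (hb₂ : 0 < b₂) :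
    StrictMonoOn (cngaPotential b₁ b₂) (Ici 0) := by
  intro p (hp : 0 ≤ p) q _ hpq
  exact add_lt_add_of_le_of_lt (by gcongr) (by gcongr)

theorem strictMonoOn_cngaPotential_Iic (hb₁ : 0 ≤ b₁) (hb₂ : 0 < b₂) :
    StrictMonoOn (cngaPotential b₁ b₂) (Iic (-b₁ / b₂)) := by
  intro p _ q (hq : q ≤ -b₁ / b₂) hpq
  have hq_nonpos : q ≤ 0 := hq.trans (div_nonpos_of_nonpos_of_nonneg (by linarith) hb₂.le)
  have h_factor_nonpos : b₁ + b₂ * q ≤ 0 := by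
    rw [le_div_iff₀ hb₂] at hq
    linarith
  -- Absorbing `b₂ q (p + q) / 2` into the first summand leaves a remainder that vanishes at
  -- `p = q` and hence factors.
  have h_diff : cngaPotential b₁ b₂ q - cngaPotential b₁ b₂ p =
      (q - p) * ((p + q) / 2 * (b₁ + b₂ * q) + b₂ / 6 * ((p - q) * (2 * p + q))) := by
    unfold cngaPotential
    ring
  have h_main : 0 ≤ (p + q) / 2 * (b₁ + b₂ * q) :=
    mul_nonneg_of_nonpos_of_nonpos (by linarith) h_factor_nonpos
  have h_remainder : 0 < b₂ / 6 * ((p - q) * (2 * p + q)) :=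
    mul_pos (by positivity) (mul_pos_of_neg_of_neg (by linarith) (by linarith))
  rw [← sub_pos, h_diff]
  exact mul_pos (sub_pos.2 hpq) (add_pos_of_nonneg_of_pos h_main h_remainder)

theorem cnga_potential_strictMono_on_S1_general (hb₁ : 0 ≤ b₁) (hb₂ : 0 < b₂) :
    StrictMonoOn (cngaPotential b₁ b₂) (Iic (-(3 * b₁) / (2 * b₂)) ∪ Ioi 0) := by
  have h_root_nonpos : -(3 * b₁) / (2 * b₂) ≤ 0 :=
    div_nonpos_of_nonpos_of_nonneg (by linarith) (by positivity)
  have h_root_le : -(3 * b₁) / (2 * b₂) ≤ -b₁ / b₂ := by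
    rw [div_le_div_iff₀ (by positivity) hb₂]
    linarith [mul_nonneg hb₁ hb₂.le]
  refine strictMonoOn_union_of_lt
    ((strictMonoOn_cngaPotential_Iic hb₁ hb₂).mono (Iic_subset_Iic.2 h_root_le))
    ((strictMonoOn_cngaPotential_Ici hb₁ hb₂).mono Ioi_subset_Ici_self) ?_ ?_
  · exact fun p hp q hq => (hp.trans h_root_nonpos).trans_lt hq
  · exact fun p hp q hq => (cngaPotential_nonpos hb₂ hp).trans_lt (cngaPotential_pos hb₁ hb₂ hq)

end CNGA

/-- The CNGA potential `Π(p) = (b₁/2)p² + (b₂/3)p³` (with `b₁, b₂ > 0`) is strictly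
increasing on the set `S₁ = {p : p ≤ -3b₁/(2b₂)} ∪ {p : p > 0}`. -/
theorem cnga_potential_strictMono_on_S1
    (b₁ b₂ : ℝ) (hb₁ : 0 < b₁) (hb₂ : 0 < b₂) :
    ∀ p ∈ {p : ℝ | p ≤ -(3 * b₁) / (2 * b₂)} ∪ {p : ℝ | 0 < p},
      ∀ p' ∈ {p : ℝ | p ≤ -(3 * b₁) / (2 * b₂)} ∪ {p : ℝ | 0 < p},
        p < p' →
          b₁ / 2 * p ^ 2 + b₂ / 3 * p ^ 3 < b₁ / 2 * p' ^ 2 + b₂ / 3 * p' ^ 3 :=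
  fun _ hp _ hp' hpp' => cnga_potential_strictMono_on_S1_general hb₁.le hb₂ hp hp' hpp'
end
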